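/- Let n ≥ 2, let f ∈ ℂ[x,y] be a nonzero homogeneous polynomial of degree n, let (a,b) ∈ ℂ² be nonzero with (a·x + b·y) dividing f, and set g := conj(a)·∂f/∂x + conj(b)·∂f/∂y. Then the following are equivalent: (i) every nonzero (c,d) ∈ ℂ² such that (c·x + d·y) divides g also satisfies that (c·x + d·y) divides f; (ii) f = K·(a₁·x + b₁·y)^p·(a₂·x + b₂·y)^{n−p} for some nonzero K ∈ ℂ, some integer 0 ≤ p ≤ n, and some nonzero vectors (a₁,b₁), (a₂,b₂) ∈ ℂ² with conj(a₁)·a₂ + conj(b₁)·b₂ = 0. -/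

import Mathlib

open MvPolynomial

/-!
Let `L = a x + b y`, let `D` be the derivative along a direction `(u, v)` with `L(u, v) ≠ 0`, and
let `M = -v x + u y` be the linear form that `D` kills. Restricted to the affine line
`t ↦ (-b, a) + t (u, v)`, a binary form `f` becomes a polynomial `F` in one variable, `D` becomes
`d/dt`, and the roots of `F` correspond to the linear factors of `f` other than `M`; the root `0`
corresponds to `L`. If every root of `F'` is a root of `F`, then comparing multiplicities gives
`deg F = deg F' + #{roots of F}`, so `0` is the only root and `F = K t ^ p`. Rehomogenizing turns
this into `f = K L ^ p M ^ (n - p)`, up to a nonzero scalar. Majorana points are the case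
`(u, v) = (conj a, conj b)`.
-/

section CommSemiring

variable {R A σ : Type*} [CommSemiring R]

lemma aeval_mul_of_isHomogeneous [CommSemiring A] [Algebra R A] {n : ℕ} {f : MvPolynomial σ R}
    (hf : f.IsHomogeneous n) (c : A) (φ : σ → A) :
    aeval (fun i ↦ c * φ i) f = c ^ n * aeval φ f := by
  simp only [aeval_def, eval₂_eq, Finset.mul_sum]
  refine Finset.sum_congr rfl fun d hd ↦ ?_
  simp only [mul_pow, Finset.prod_mul_distrib, Finset.prod_pow_eq_pow_sum,
    ← hf.degree_eq_sum_deg_support hd]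
  ring

/-- The directional derivative of polynomials along the constant vector `v`. -/
noncomputable def dirDeriv (v : σ → R) :
    Derivation R (MvPolynomial σ R) (MvPolynomial σ R) :=
  mkDerivation R fun i ↦ C (v i)

lemma dirDeriv_fin_two (u v : R) (f : MvPolynomial (Fin 2) R) :
    dirDeriv ![u, v] f = C u * pderiv 0 f + C v * pderiv 1 f := by
  have h : dirDeriv ![u, v] = u • pderiv 0 + v • pderiv 1 :=
    derivation_ext fun i ↦ by fin_cases i <;> simp [dirDeriv, mkDerivation_X, smul_eq_C_mul]
  simp [h, smul_eq_C_mul]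

lemma isHomogeneous_dirDeriv {n : ℕ} {f : MvPolynomial (Fin 2) R} (hf : f.IsHomogeneous n)
    (u v : R) : (dirDeriv ![u, v] f).IsHomogeneous (n - 1) := by
  rw [dirDeriv_fin_two]
  exact (hf.pderiv.C_mul u).add (hf.pderiv.C_mul v)

/-- Restriction of polynomials to the line `t ↦ x + t v`, with `t` the variable of `R[X]`. -/
noncomputable def restrictLine (x v : σ → R) : MvPolynomial σ R →ₐ[R] Polynomial R :=
  aeval fun i ↦ Polynomial.C (x i) + Polynomial.C (v i) * Polynomial.X

lemma derivative_restrictLine (x v : σ → R) (f : MvPolynomial σ R) :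
    (restrictLine x v f).derivative = restrictLine x v (dirDeriv v f) := by
  induction f using MvPolynomial.induction_on with
  | C r => simp [restrictLine]
  | add p q hp hq => simp only [map_add, hp, hq]
  | mul_X p i hp =>
    simp only [map_mul, map_add, Polynomial.derivative_mul, hp, Derivation.leibniz, smul_eq_mul]
    simp only [restrictLine, dirDeriv, aeval_X, mkDerivation_X, algHom_C, Polynomial.algebraMap_eq,
      Polynomial.derivative_add, Polynomial.derivative_C, Polynomial.derivative_mul,
      Polynomial.derivative_X]
    ring

lemma eval_restrictLine (x v : σ → R) (f : MvPolynomial σ R) (r : R) :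
    (restrictLine x v f).eval r = eval (fun i ↦ x i + v i * r) f := by
  simp only [← Polynomial.coe_aeval_eq_eval, restrictLine, ← MvPolynomial.coe_aeval_eq_eval,
    RingHom.coe_coe]
  simp [comp_aeval_apply]

lemma natDegree_restrictLine_le {n : ℕ} {f : MvPolynomial σ R} (hf : f.totalDegree ≤ n)
    (x v : σ → R) : (restrictLine x v f).natDegree ≤ n := by
  have hlin (i : σ) :
      (Polynomial.C (x i) + Polynomial.C (v i) * Polynomial.X).natDegree ≤ 1 := by
    rw [add_comm]
    exact Polynomial.natDegree_linear_le
  simpa only [mul_one, restrictLine] using aeval_natDegree_le f hf _ hlin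

/-- The binary linear form `a x + b y`. -/
noncomputable def linForm (a b : R) : MvPolynomial (Fin 2) R := C a * X 0 + C b * X 1

lemma dirDeriv_linForm (a b u v : R) : dirDeriv ![u, v] (linForm a b) = C (a * u + b * v) := by
  simp [linForm, dirDeriv, mkDerivation_X]

lemma aeval_linForm [CommSemiring A] [Algebra R A] (a b : R) (φ : Fin 2 → A) :
    aeval φ (linForm a b) = algebraMap R A a * φ 0 + algebraMap R A b * φ 1 := by
  simp [linForm]

lemma eval_linForm (a b x y : R) : eval ![x, y] (linForm a b) = a * x + b * y :=
  aeval_linForm a b ![x, y]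

lemma isHomogeneous_linForm (a b : R) : (linForm a b).IsHomogeneous 1 :=
  (isHomogeneous_C_mul_X a 0).add (isHomogeneous_C_mul_X b 1)

lemma linForm_mul_left (t a b : R) : linForm (t * a) (t * b) = C t * linForm a b := by
  simp only [linForm, C_mul]
  ring

end CommSemiring

section CommRing

variable {R : Type*} [CommRing R] {n : ℕ} {f : MvPolynomial (Fin 2) R}

lemma eval_linForm_self (a b : R) : eval ![-b, a] (linForm a b) = 0 := by
  rw [eval_linForm]
  ring

lemma exists_mul_eq_of_isCoprime {a b a₁ b₁ : R} (hab : IsCoprime a b) (h : a₁ * b = b₁ * a) :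
    ∃ t, a₁ = t * a ∧ b₁ = t * b := by
  obtain ⟨s, t, hst⟩ := hab
  refine ⟨s * a₁ + t * b₁, ?_, ?_⟩
  · linear_combination -a₁ * hst + t * h
  · linear_combination -b₁ * hst - s * h

lemma dvd_aeval_sub_aeval {A σ : Type*} [CommRing A] [Algebra R A] {d : A} {φ ψ : σ → A}
    (h : ∀ i, d ∣ φ i - ψ i) (f : MvPolynomial σ R) : d ∣ aeval φ f - aeval ψ f := by
  simp only [← Ideal.mem_span_singleton, ← Ideal.Quotient.eq, ← Ideal.Quotient.mkₐ_eq_mk R] at h ⊢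
  simp only [comp_aeval_apply, h]

lemma linForm_dvd_iff_eval_eq_zero (hf : f.IsHomogeneous n) {a b : R} (hab : IsCoprime a b) :
    linForm a b ∣ f ↔ eval ![-b, a] f = 0 := by
  refine ⟨?_, fun h ↦ ?_⟩
  · rintro ⟨g, rfl⟩
    rw [map_mul, eval_linForm_self, zero_mul]
  · obtain ⟨s, t, hst⟩ := hab
    have hC : (C s * C a + C t * C b : MvPolynomial (Fin 2) R) = 1 := by
      rw [← C_mul, ← C_mul, ← C_add, hst, C_1]
    -- Modulo `a x + b y`, the vector `(x, y)` is the multiple `s y - t x` of `(-b, a)`.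
    let c : MvPolynomial (Fin 2) R := C s * X 1 - C t * X 0
    have hX₀ : X 0 - c * C (-b) = linForm a b * C s := by
      simp only [linForm, c, C_neg]
      linear_combination -X 0 * hC
    have hX₁ : X 1 - c * C a = linForm a b * C t := by
      simp only [linForm, c]
      linear_combination -X 1 * hC
    have hX : ∀ i, linForm a b ∣ X i - c * C (![-b, a] i) :=
      Fin.forall_fin_two.2 ⟨⟨C s, hX₀⟩, ⟨C t, hX₁⟩⟩
    have hf0 : aeval (fun i ↦ c * C (![-b, a] i)) f = 0 := by
      have hconst : aeval (fun i ↦ C (![-b, a] i)) f = C (eval ![-b, a] f) :=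
        aeval_algebraMap_apply (MvPolynomial (Fin 2) R) ![-b, a] f
      rw [aeval_mul_of_isHomogeneous hf, hconst, h, C_0, mul_zero]
    simpa only [aeval_X_left_apply, hf0, sub_zero] using dvd_aeval_sub_aeval hX f

lemma homogenize_restrictLine (hf : f.IsHomogeneous n) (x y u v : R) :
    (restrictLine ![x, y] ![u, v] f).homogenize n = aeval ![linForm u x, linForm v y] f := by
  refine Polynomial.homogenize_eq_of_isHomogeneous ?_ ?_
  · simpa only [one_mul] using hf.aeval ![linForm u x, linForm v y]
      (Fin.forall_fin_two.2 ⟨isHomogeneous_linForm u x, isHomogeneous_linForm v y⟩)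
  · have hline (p q : R) : aeval ![Polynomial.X, 1] (linForm p q) =
        Polynomial.C q + Polynomial.C p * Polynomial.X := by
      simp [aeval_linForm, add_comm]
    rw [comp_aeval_apply, restrictLine]
    congr 2
    exact _root_.funext (Fin.forall_fin_two.2 ⟨hline u x, hline v y⟩)

lemma C_pow_mul_eq_aeval_homogenize_restrictLine (hf : f.IsHomogeneous n) (a b u v : R) :
    C ((a * u + b * v) ^ n) * f =
      aeval ![linForm a b, linForm (-v) u]
        ((restrictLine ![-b, a] ![u, v] f).homogenize n) := by
  have hX₀ : aeval ![linForm a b, linForm (-v) u] (linForm u (-b)) = C (a * u + b * v) * X 0 := by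
    rw [aeval_linForm]
    simp only [linForm, algebraMap_eq, Matrix.cons_val_zero, Matrix.cons_val_one, C_neg, C_add,
      C_mul]
    ring
  have hX₁ : aeval ![linForm a b, linForm (-v) u] (linForm v a) = C (a * u + b * v) * X 1 := by
    rw [aeval_linForm]
    simp only [linForm, algebraMap_eq, Matrix.cons_val_zero, Matrix.cons_val_one, C_neg, C_add,
      C_mul]
    ring
  have hscale := aeval_mul_of_isHomogeneous hf (C (a * u + b * v)) X
  rw [aeval_X_left_apply, ← C_pow] at hscale
  rw [homogenize_restrictLine hf, comp_aeval_apply, ← hscale]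
  congr 2
  exact _root_.funext (Fin.forall_fin_two.2 ⟨hX₀.symm, hX₁.symm⟩)

end CommRing

section Field

variable {𝕜 : Type*} [Field 𝕜]

lemma eq_C_mul_X_sub_C_pow_of_isRoot_of_derivative [CharZero 𝕜] {F : Polynomial 𝕜} (hF : F ≠ 0)
    (hs : F.Splits) (hs' : F.derivative.Splits) {r : 𝕜} (hr : F.IsRoot r)
    (h : ∀ t, F.derivative.IsRoot t → F.IsRoot t) :
    F = Polynomial.C F.leadingCoeff * (Polynomial.X - Polynomial.C r) ^ F.natDegree := by
  classical
  have hr_mem : r ∈ F.roots := (Polynomial.mem_roots hF).2 hr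
  have hroots : F.roots = F.derivative.roots + F.roots.dedup := by
    ext t
    rw [Multiset.count_add, Polynomial.count_roots, Polynomial.count_roots, Multiset.count_dedup]
    by_cases ht : F.IsRoot t
    · rw [Polynomial.derivative_rootMultiplicity_of_root ht,
        if_pos ((Polynomial.mem_roots hF).2 ht),
        Nat.sub_add_cancel ((Polynomial.rootMultiplicity_pos hF).2 ht)]
    · rw [Polynomial.rootMultiplicity_eq_zero ht, if_neg (mt (Polynomial.mem_roots hF).1 ht),
        Polynomial.rootMultiplicity_eq_zero (mt (h t) ht)]
  have hcard : F.roots.toFinset.card = 1 := by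
    have hpos : 0 < F.roots.card := Multiset.card_pos_iff_exists_mem.2 ⟨r, hr_mem⟩
    have hadd := congrArg Multiset.card hroots
    rw [Multiset.card_add, ← hs'.natDegree_eq_card_roots, Polynomial.natDegree_derivative,
      hs.natDegree_eq_card_roots] at hadd
    rw [Multiset.card_toFinset]
    omega
  obtain ⟨t, ht⟩ := ((Multiset.toFinset_card_eq_one_iff _).1 hcard).2
  obtain rfl : r = t := by
    rw [ht] at hr_mem
    exact Multiset.mem_singleton.1 (Multiset.mem_of_mem_nsmul hr_mem)
  conv_lhs => rw [hs.eq_prod_roots, ht, ← hs.natDegree_eq_card_roots, Multiset.map_nsmul,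
    Multiset.prod_nsmul, Multiset.map_singleton, Multiset.prod_singleton]

variable {a b u v : 𝕜} {n : ℕ} {f : MvPolynomial (Fin 2) 𝕜}

lemma isCoprime_iff_not_both_zero : IsCoprime a b ↔ ¬(a = 0 ∧ b = 0) :=
  Semifield.isCoprime_iff.trans not_and_or.symm

lemma isCoprime_of_mul_add_mul_ne_zero (h : a * u + b * v ≠ 0) : IsCoprime a b := by
  refine isCoprime_iff_not_both_zero.2 ?_
  rintro ⟨rfl, rfl⟩
  simp at h

lemma isCoprime_pencil (h : a * u + b * v ≠ 0) (r : 𝕜) :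
    IsCoprime (a + v * r) (b - u * r) :=
  isCoprime_of_mul_add_mul_ne_zero (u := u) (v := v) <| by
    convert h using 1
    ring

lemma isRoot_restrictLine_iff (hf : f.IsHomogeneous n) (h : a * u + b * v ≠ 0) (r : 𝕜) :
    (restrictLine ![-b, a] ![u, v] f).IsRoot r ↔ linForm (a + v * r) (b - u * r) ∣ f := by
  have hpt : (fun i ↦ ![-b, a] i + ![u, v] i * r) = ![-(b - u * r), a + v * r] := by
    refine _root_.funext (Fin.forall_fin_two.2 ⟨?_, rfl⟩)
    change -b + u * r = -(b - u * r)
    ring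
  rw [linForm_dvd_iff_eval_eq_zero hf (isCoprime_pencil h r), Polynomial.IsRoot,
    eval_restrictLine, hpt]

lemma exists_eq_linForm_pow_mul_of_dirDeriv_dvd_imp [IsAlgClosed 𝕜] [CharZero 𝕜] (hf : f ≠ 0)
    (hhom : f.IsHomogeneous n) (huv : a * u + b * v ≠ 0) (hdvd : linForm a b ∣ f)
    (h : ∀ c d : 𝕜, ¬(c = 0 ∧ d = 0) → linForm c d ∣ dirDeriv ![u, v] f → linForm c d ∣ f) :
    ∃ (K : 𝕜) (p : ℕ), K ≠ 0 ∧ p ≤ n ∧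
      f = C K * linForm a b ^ p * linForm (-v) u ^ (n - p) := by
  let F := restrictLine ![-b, a] ![u, v] f
  let p := F.natDegree
  have hN : (a * u + b * v) ^ n ≠ 0 := pow_ne_zero n huv
  have hfF : C ((a * u + b * v) ^ n) * f = aeval ![linForm a b, linForm (-v) u] (F.homogenize n) :=
    C_pow_mul_eq_aeval_homogenize_restrictLine hhom a b u v
  have hF : F ≠ 0 := fun hF0 ↦ by
    rw [hF0, Polynomial.homogenize_zero, map_zero] at hfF
    exact mul_ne_zero (C_ne_zero.2 hN) hf hfF
  have hF_root : F.IsRoot 0 := by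
    simpa only [mul_zero, add_zero, sub_zero] using (isRoot_restrictLine_iff hhom huv 0).2
      (by simpa only [mul_zero, add_zero, sub_zero] using hdvd)
  have hroots (r : 𝕜) (hr : F.derivative.IsRoot r) : F.IsRoot r := by
    rw [derivative_restrictLine,
      isRoot_restrictLine_iff (isHomogeneous_dirDeriv hhom u v) huv] at hr
    refine (isRoot_restrictLine_iff hhom huv r).2 (h _ _ ?_ hr)
    exact isCoprime_iff_not_both_zero.1 (isCoprime_pencil huv r)
  have hFX : F = Polynomial.C F.leadingCoeff * Polynomial.X ^ p := by
    simpa only [Polynomial.C_0, sub_zero] using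
      eq_C_mul_X_sub_C_pow_of_isRoot_of_derivative hF (IsAlgClosed.splits _)
        (IsAlgClosed.splits _) hF_root hroots
  have hp : p ≤ n := natDegree_restrictLine_le hhom.totalDegree_le _ _
  refine ⟨F.leadingCoeff / (a * u + b * v) ^ n, p,
    div_ne_zero (Polynomial.leadingCoeff_ne_zero.2 hF) hN, hp, ?_⟩
  refine mul_left_cancel₀ (C_ne_zero.2 hN) ?_
  rw [hfF, ← mul_assoc, ← mul_assoc, ← C_mul, mul_div_cancel₀ _ hN]
  conv_lhs => rw [hFX]
  rw [Polynomial.homogenize_C_mul, Polynomial.homogenize_X_pow hp]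
  simp [mul_assoc]

lemma dirDeriv_linForm_pow_mul_dvd [CharZero 𝕜] (K : 𝕜) {c d : 𝕜} {p : ℕ} (q : ℕ) (hp : p ≠ 0)
    (hab : a * u + b * v ≠ 0) (hcd : c * u + d * v = 0) :
    dirDeriv ![u, v] (C K * linForm a b ^ p * linForm c d ^ q) ∣
      C K * linForm a b ^ p * linForm c d ^ q := by
  obtain ⟨m, rfl⟩ := Nat.exists_eq_add_one_of_ne_zero hp
  let s := (m + 1 : 𝕜) * (a * u + b * v)
  have hs : IsUnit (C s : MvPolynomial (Fin 2) 𝕜) :=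
    (mul_ne_zero m.cast_add_one_ne_zero hab).isUnit.map C
  have hderiv : dirDeriv ![u, v] (C K * linForm a b ^ (m + 1) * linForm c d ^ q) =
      C s * (C K * linForm a b ^ m * linForm c d ^ q) := by
    simp only [s, Derivation.leibniz, Derivation.leibniz_pow, derivation_C, dirDeriv_linForm, hcd,
      C_0, C_1, C_add, C_mul, map_natCast, Nat.add_sub_cancel, smul_eq_mul, nsmul_eq_mul,
      Nat.cast_add, Nat.cast_one]
    ring
  rw [hderiv, hs.mul_left_dvd]
  exact ⟨linForm a b, by ring⟩

theorem mp_containment_iff_dicke_general [IsAlgClosed 𝕜] [CharZero 𝕜] (hf : f ≠ 0)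
    (hhom : f.IsHomogeneous n) (huv : a * u + b * v ≠ 0) (hdvd : linForm a b ∣ f) :
    (∀ c d : 𝕜, ¬(c = 0 ∧ d = 0) → linForm c d ∣ dirDeriv ![u, v] f → linForm c d ∣ f) ↔
      ∃ (K : 𝕜) (p : ℕ), K ≠ 0 ∧ p ≤ n ∧
        f = C K * linForm a b ^ p * linForm (-v) u ^ (n - p) := by
  refine ⟨exists_eq_linForm_pow_mul_of_dirDeriv_dvd_imp hf hhom huv hdvd, ?_⟩
  rintro ⟨K, p, hK, -, rfl⟩ c d - hcd
  have hp : p ≠ 0 := by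
    rintro rfl
    rw [linForm_dvd_iff_eval_eq_zero hhom (isCoprime_of_mul_add_mul_ne_zero huv)] at hdvd
    have hN : eval ![-b, a] (linForm (-v) u) = a * u + b * v := by
      rw [eval_linForm]
      ring
    rw [pow_zero, mul_one, map_mul, eval_C, map_pow, hN] at hdvd
    exact mul_ne_zero hK (pow_ne_zero _ huv) hdvd
  exact hcd.trans (dirDeriv_linForm_pow_mul_dvd K _ hp huv (by ring))

end Field

section StarRing

variable {𝕜 : Type*} [Field 𝕜] [StarRing 𝕜] {n : ℕ} {f : MvPolynomial (Fin 2) 𝕜} {a b : 𝕜}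

open ComplexConjugate

/-- The binary form of a degree-`n` Dicke state up to rotation: a nonzero multiple of
`L₁ ^ p * L₂ ^ (n - p)`, where `L₁` and `L₂` are nonzero linear forms whose coefficient vectors are
orthogonal for the Hermitian product. The normalization of the state is not recorded. -/
def IsRotatedDicke (n : ℕ) (f : MvPolynomial (Fin 2) 𝕜) : Prop :=
  ∃ (K : 𝕜) (p : ℕ) (a₁ b₁ a₂ b₂ : 𝕜), K ≠ 0 ∧ p ≤ n ∧ ¬(a₁ = 0 ∧ b₁ = 0) ∧
    ¬(a₂ = 0 ∧ b₂ = 0) ∧ conj a₁ * a₂ + conj b₁ * b₂ = 0 ∧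
      f = C K * linForm a₁ b₁ ^ p * linForm a₂ b₂ ^ (n - p)

lemma conj_orthogonal_ne_zero (hab : ¬(a = 0 ∧ b = 0)) : ¬(-conj b = 0 ∧ conj a = 0) := by
  simpa [and_comm] using hab

lemma exists_linForm_eq_C_mul_of_orthogonal {a₁ b₁ a₂ b₂ : 𝕜} (hab : ¬(a = 0 ∧ b = 0))
    (h₁ : ¬(a₁ = 0 ∧ b₁ = 0)) (h₂ : ¬(a₂ = 0 ∧ b₂ = 0))
    (horth : conj a₁ * a₂ + conj b₁ * b₂ = 0) (hpar : a₁ * b = b₁ * a) :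
    ∃ s t : 𝕜, s ≠ 0 ∧ t ≠ 0 ∧ linForm a₁ b₁ = C s * linForm a b ∧
      linForm a₂ b₂ = C t * linForm (-conj b) (conj a) := by
  obtain ⟨s, rfl, rfl⟩ := exists_mul_eq_of_isCoprime (isCoprime_iff_not_both_zero.2 hab) hpar
  have hs : s ≠ 0 := by
    rintro rfl
    simp at h₁
  have horth' : a₂ * conj a = b₂ * -conj b := by
    refine mul_left_cancel₀ ((map_ne_zero (starRingEnd 𝕜)).2 hs) ?_
    simp only [map_mul] at horth
    linear_combination horth
  obtain ⟨t, rfl, rfl⟩ := exists_mul_eq_of_isCoprime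
    (isCoprime_iff_not_both_zero.2 (conj_orthogonal_ne_zero hab)) horth'
  have ht : t ≠ 0 := by
    rintro rfl
    simp at h₂
  exact ⟨s, t, hs, ht, linForm_mul_left s a b, linForm_mul_left t _ _⟩

lemma isRotatedDicke_iff (hab : ¬(a = 0 ∧ b = 0)) (hdvd : linForm a b ∣ f) :
    IsRotatedDicke n f ↔ ∃ (K : 𝕜) (p : ℕ), K ≠ 0 ∧ p ≤ n ∧
      f = C K * linForm a b ^ p * linForm (-conj b) (conj a) ^ (n - p) := by
  constructor
  · rintro ⟨K, p, a₁, b₁, a₂, b₂, hK, hp, h₁, h₂, horth, rfl⟩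
    have hpar : a₁ * b = b₁ * a ∨ a₂ * b = b₂ * a := by
      have h0 := map_dvd (eval ![-b, a]) hdvd
      simp only [eval_linForm_self, zero_dvd_iff, map_mul, map_pow, eval_C, mul_eq_zero, hK,
        false_or] at h0
      refine h0.imp (fun h ↦ ?_) fun h ↦ ?_ <;>
      · have h_eval := eq_zero_of_pow_eq_zero h
        rw [eval_linForm] at h_eval
        linear_combination -h_eval
    rcases hpar with hpar | hpar
    · obtain ⟨s, t, hs, ht, hL₁, hL₂⟩ :=
        exists_linForm_eq_C_mul_of_orthogonal hab h₁ h₂ horth hpar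
      refine ⟨K * s ^ p * t ^ (n - p), p, by simp [hK, hs, ht], hp, ?_⟩
      simp only [hL₁, hL₂, mul_pow, C_mul, C_pow]
      ring
    · have horth' : conj a₂ * a₁ + conj b₂ * b₁ = 0 := by
        simpa [mul_comm] using congrArg conj horth
      obtain ⟨s, t, hs, ht, hL₂, hL₁⟩ :=
        exists_linForm_eq_C_mul_of_orthogonal hab h₂ h₁ horth' hpar
      refine ⟨K * t ^ p * s ^ (n - p), n - p, by simp [hK, hs, ht], n.sub_le p, ?_⟩
      simp only [hL₁, hL₂, mul_pow, C_mul, C_pow, Nat.sub_sub_self hp]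
      ring
  · rintro ⟨K, p, hK, hp, rfl⟩
    exact ⟨K, p, a, b, _, _, hK, hp, hab, conj_orthogonal_ne_zero hab, by ring, rfl⟩

end StarRing

open ComplexConjugate in
lemma mul_conj_add_mul_conj_ne_zero {𝕜 : Type*} [RCLike 𝕜] {a b : 𝕜} (hab : ¬(a = 0 ∧ b = 0)) :
    a * conj a + b * conj b ≠ 0 := by
  rw [RCLike.mul_conj, RCLike.mul_conj]
  norm_cast
  rwa [add_eq_zero_iff_of_nonneg (sq_nonneg _) (sq_nonneg _), sq_eq_zero_iff, sq_eq_zero_iff,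
    norm_eq_zero, norm_eq_zero]

/-- for a nonzero degree-`n` binary form `f` (n ≥ 2) with linear
factor `a·x + b·y`, and `g = conj(a)·∂f/∂x + conj(b)·∂f/∂y`: every linear factor
of `g` is a linear factor of `f` iff `f` is (up to scalar) a product of powers of
two linear forms with orthogonal coefficient vectors (i.e. a rotated Dicke state). -/
theorem mp_containment_iff_dicke (n : ℕ) (hn : 2 ≤ n)
    (f : MvPolynomial (Fin 2) ℂ) (hf : f ≠ 0) (hhom : f.IsHomogeneous n)
    (a b : ℂ) (hab : ¬(a = 0 ∧ b = 0))
    (hdvd : (C a * X (0 : Fin 2) + C b * X (1 : Fin 2)) ∣ f)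
    (g : MvPolynomial (Fin 2) ℂ)
    (hg : g = C ((starRingEnd ℂ) a) * pderiv (0 : Fin 2) f
            + C ((starRingEnd ℂ) b) * pderiv (1 : Fin 2) f) :
    (∀ c d : ℂ, ¬(c = 0 ∧ d = 0) →
        (C c * X (0 : Fin 2) + C d * X (1 : Fin 2)) ∣ g →
        (C c * X (0 : Fin 2) + C d * X (1 : Fin 2)) ∣ f) ↔
      ∃ (K : ℂ) (p : ℕ) (a₁ b₁ a₂ b₂ : ℂ), K ≠ 0 ∧ p ≤ n ∧
        ¬(a₁ = 0 ∧ b₁ = 0) ∧ ¬(a₂ = 0 ∧ b₂ = 0) ∧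
        (starRingEnd ℂ) a₁ * a₂ + (starRingEnd ℂ) b₁ * b₂ = 0 ∧
        f = C K * (C a₁ * X (0 : Fin 2) + C b₁ * X (1 : Fin 2)) ^ p
              * (C a₂ * X (0 : Fin 2) + C b₂ * X (1 : Fin 2)) ^ (n - p) := by
  rw [hg, ← dirDeriv_fin_two]
  exact (mp_containment_iff_dicke_general hf hhom (mul_conj_add_mul_conj_ne_zero hab) hdvd).trans
    (isRotatedDicke_iff hab hdvd).symm
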